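/- Let n ≥ 3 be an integer and let G be a K_3-saturated simple graph on n vertices such that the sum over all vertices v of d(v)² equals (n-1)² + (n-1), where d(v) denotes the degree of v. Then either G is isomorphic to the star S_{n,2} (one center adjacent to all n-1 other vertices, which form an independent set), or G has diameter 2 and girth 5 (i.e., G is a Moore graph of diameter 2). -/

import Mathlib

open SimpleGraph

/-- A graph `G` is `K_r`-saturated if it contains no `r`-clique, but adding any edge
between distinct non-adjacent vertices creates an `r`-clique. -/
def IsKSaturated {V : Type*} (r : ℕ) (G : SimpleGraph V) : Prop :=
  G.CliqueFree r ∧ ∀ u v : V, u ≠ v → ¬ G.Adj u v →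
    ¬ (G ⊔ SimpleGraph.fromEdgeSet {s(u, v)}).CliqueFree r

/-- The graph `S_{n,r}`: a complete graph on the `r-1` vertices `{0, …, r-2}` of `Fin n`,
together with `n-r+1` further vertices each adjacent exactly to those `r-1` vertices.
In particular `Snr n 2` is the star: vertex `0` is adjacent to all other vertices,
which form an independent set. -/
def Snr (n r : ℕ) : SimpleGraph (Fin n) :=
  SimpleGraph.fromRel (fun u v => (u : ℕ) < r - 1 ∨ (v : ℕ) < r - 1)

/-!
Write `m u v` for the number of paths of length at most two between distinct vertices `u` and `v`.
Sorting these paths by their edge or by their middle vertex shows that `∑ v, d(v) ^ 2` is the sum of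
`m u v` over all ordered pairs. Diameter at most two means that every `m u v` is at least one, so a
degree-square sum of at most `n * (n - 1)` forces `m u v = 1` throughout; that excludes triangles
and `4`-cycles. If no vertex is universal, then some edge `bc` extends to a walk `a, b, c, d`
without backtracking, and a common neighbor of `a` and `d` closes it to a `5`-cycle.
-/

section Distance

variable {V : Type*} {G : SimpleGraph V}

theorem ediam_le_two_iff :
    G.ediam ≤ 2 ↔ ∀ u v, u ≠ v → ¬ G.Adj u v → (G.commonNeighbors u v).Nonempty := by
  simp_rw [ediam_le_iff, ← not_lt, two_lt_edist_iff, Set.nonempty_iff_ne_empty, not_and]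

theorem IsKSaturated.ediam_le_two {r : ℕ} (hr : 3 ≤ r) (hG : IsKSaturated r G) : G.ediam ≤ 2 := by
  classical
  refine ediam_le_two_iff.mpr fun u v huv hadj ↦ ?_
  obtain ⟨t, ht⟩ := not_forall_not.mp (hG.2 u v huv hadj)
  change (G ⊔ edge u v).IsNClique r t at ht
  have hu : u ∈ t := hG.1.mem_of_sup_edge_isNClique ht
  have hv : v ∈ t := hG.1.mem_of_sup_edge_isNClique (edge_comm u v ▸ ht)
  obtain ⟨w, hw, hwuv⟩ : ∃ w ∈ t, w ∉ ({u, v} : Finset V) :=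
    Finset.exists_mem_notMem_of_card_lt_card (by grind [ht.card_eq, Finset.card_le_two])
  have huw := ht.isClique hu hw
  have hvw := ht.isClique hv hw
  simp only [sup_adj, edge_adj] at huw hvw
  exact ⟨w, by grind [mem_neighborSet], by grind [mem_neighborSet]⟩

theorem exists_cycle_length_four_iff :
    (∃ (a : V) (w : G.Walk a a), w.IsCycle ∧ w.length = 4) ↔
      ∃ u v, u ≠ v ∧ (G.commonNeighbors u v).Nontrivial := by
  constructor
  · intro ⟨u, .cons (v := x) hux (.cons (v := v) hxv (.cons (v := y) hvy (.cons hyu .nil))), hw, _⟩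
    have hnodup := hw.support_nodup
    simp only [Walk.support_cons, Walk.support_nil, List.tail_cons, List.nodup_cons] at hnodup
    exact ⟨u, v, by grind, x, ⟨hux, hxv.symm⟩, y, ⟨hyu.symm, hvy⟩, by grind⟩
  · rintro ⟨u, v, huv, x, ⟨hux, hvx⟩, y, ⟨huy, hvy⟩, hxy⟩
    rw [mem_neighborSet] at hux hvx huy hvy
    refine ⟨u, .cons hux <| .cons hvx.symm <| .cons hvy <| .cons huy.symm .nil, ?_, rfl⟩
    simp only [Walk.cons_isCycle_iff, Walk.cons_isPath_iff, Walk.IsPath.nil, Walk.support_cons,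
      Walk.support_nil, Walk.edges_cons, Walk.edges_nil, List.mem_cons, Sym2.eq_iff]
    grind [Adj.ne]

theorem five_le_egirth_iff :
    5 ≤ G.egirth ↔
      G.CliqueFree 3 ∧ ∀ u v, u ≠ v → (G.commonNeighbors u v).Subsingleton := by
  have h3 := (is3Clique_iff_exists_cycle_length_three (G := G)).not
  have h4 := (exists_cycle_length_four_iff (G := G)).not
  simp only [not_exists, not_and, Set.not_nontrivial_iff] at h3 h4
  rw [CliqueFree, h3, ← h4, le_egirth, ← forall_and]
  refine forall_congr' fun a ↦ ?_
  rw [← forall_and]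
  refine forall_congr' fun w ↦ ?_
  rw [← imp_and, ← Nat.cast_ofNat, Nat.cast_le]
  refine imp_congr_right fun hw ↦ ?_
  have := hw.three_le_length
  lia

theorem egirth_le_five_of_ediam_le_two (hdiam : G.ediam ≤ 2) {a b c d : V} (hab : G.Adj a b)
    (hbc : G.Adj b c) (hcd : G.Adj c d) (hac : a ≠ c) (hbd : b ≠ d) : G.egirth ≤ 5 := by
  classical
  by_contra! hlt
  obtain ⟨h3, h4⟩ := five_le_egirth_iff.mp hlt.le
  have htri {x y z : V} (hxy : G.Adj x y) (hyz : G.Adj y z) : ¬ G.Adj x z :=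
    fun hxz ↦ h3 {x, y, z} (is3Clique_triple_iff.mpr ⟨hxy, hxz, hyz⟩)
  have had : a ≠ d := fun had ↦ htri hab hbc (had ▸ hcd.symm)
  have hnad : ¬ G.Adj a d :=
    fun had ↦ hbd (h4 a c hac ⟨hab, hbc.symm⟩ ⟨had, hcd⟩)
  obtain ⟨e, hae, hde⟩ := ediam_le_two_iff.mp hdiam a d had hnad
  rw [mem_neighborSet] at hae hde
  let w : G.Walk a a :=
    .cons hab <| .cons hbc <| .cons hcd <| .cons hde <| .cons hae.symm .nil
  have hw : w.IsCycle := by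
    have hbe : b ≠ e := fun hbe ↦ htri hbc hcd (hbe ▸ hde.symm)
    have hce : c ≠ e := fun hce ↦ htri hab hbc (hce ▸ hae)
    simp only [w, Walk.cons_isCycle_iff, Walk.cons_isPath_iff, Walk.IsPath.nil, Walk.support_cons,
      Walk.support_nil, Walk.edges_cons, Walk.edges_nil, List.mem_cons, Sym2.eq_iff]
    grind [Adj.ne]
  exact hlt.not_ge (egirth_le_length hw)

end Distance

section Degree

variable {V : Type*} [Fintype V] {G : SimpleGraph V} [DecidableRel G.Adj]

variable (G) in
/-- The number of paths of length one or two between distinct vertices `u` and `v`: a path of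
length two is encoded by its middle vertex. The value at `u = v` is the degree of `u`. -/
def shortPathCount (u v : V) : ℕ :=
  (if G.Adj u v then 1 else 0) + Fintype.card (G.commonNeighbors u v)

theorem sum_offDiag_ite_adj :
    ∑ p ∈ Finset.univ.offDiag, (if G.Adj p.1 p.2 then 1 else 0) = ∑ v, G.degree v := by
  classical
  have hsub : (Finset.univ : Finset V).offDiag ⊆ Finset.univ ×ˢ Finset.univ := by simp
  rw [Finset.sum_subset hsub (by simp +contextual), Finset.sum_product]
  refine Finset.sum_congr rfl fun u _ ↦ ?_
  rw [← card_neighborFinset_eq_degree, neighborFinset_eq_filter, Finset.card_filter]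

theorem sum_offDiag_card_commonNeighbors :
    ∑ p ∈ Finset.univ.offDiag, Fintype.card (G.commonNeighbors p.1 p.2) =
      ∑ v, (G.neighborFinset v).offDiag.card := by
  classical
  let r (v : V) (p : V × V) : Prop := G.Adj v p.1 ∧ G.Adj v p.2
  have hbelow (p : V × V) :
      Fintype.card (G.commonNeighbors p.1 p.2) = (Finset.univ.bipartiteBelow r p).card :=
    Fintype.card_of_finset' _ fun v ↦ by
      simp [r, mem_commonNeighbors, G.adj_comm v]
  have habove (v : V) :
      (G.neighborFinset v).offDiag = Finset.univ.offDiag.bipartiteAbove r v := by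
    ext p
    simp only [Finset.mem_offDiag, mem_neighborFinset, Finset.mem_bipartiteAbove,
      Finset.mem_univ, true_and, r]
    tauto
  simp only [hbelow, habove]
  exact (Finset.sum_card_bipartiteAbove_eq_sum_card_bipartiteBelow r).symm

theorem sum_offDiag_shortPathCount :
    ∑ p ∈ Finset.univ.offDiag, shortPathCount G p.1 p.2 = ∑ v, G.degree v ^ 2 := by
  simp only [shortPathCount, Finset.sum_add_distrib, sum_offDiag_ite_adj,
    sum_offDiag_card_commonNeighbors]
  rw [← Finset.sum_add_distrib]
  refine Finset.sum_congr rfl fun v _ ↦ ?_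
  rw [Finset.offDiag_card, card_neighborFinset_eq_degree, sq,
    Nat.add_sub_cancel' (Nat.le_mul_self _)]

theorem one_le_shortPathCount (hdiam : G.ediam ≤ 2) {u v : V} (huv : u ≠ v) :
    1 ≤ shortPathCount G u v := by
  by_cases hadj : G.Adj u v
  · simp [shortPathCount, hadj]
  · have := (ediam_le_two_iff.mp hdiam u v huv hadj).to_subtype
    simpa [shortPathCount, hadj] using Fintype.card_pos (α := G.commonNeighbors u v)

theorem five_le_egirth_of_shortPathCount_le_one
    (h : ∀ u v, u ≠ v → shortPathCount G u v ≤ 1) : 5 ≤ G.egirth := by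
  classical
  refine five_le_egirth_iff.mpr ⟨fun s hs ↦ ?_, fun u v huv ↦ ?_⟩
  · obtain ⟨a, b, c, hab, hac, hbc, -⟩ := is3Clique_iff.mp hs
    have hpos : 0 < Fintype.card (G.commonNeighbors a b) := Fintype.card_pos_iff.mpr ⟨c, hac, hbc⟩
    have := h a b hab.ne
    simp only [shortPathCount, hab, if_true] at this
    lia
  · rw [← Set.subsingleton_coe, ← Fintype.card_le_one_iff_subsingleton]
    exact (Nat.le_add_left _ _).trans (h u v huv)

theorem five_le_egirth_of_sum_degree_sq_le (hdiam : G.ediam ≤ 2)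
    (hsum : ∑ v, G.degree v ^ 2 ≤ Fintype.card V * (Fintype.card V - 1)) : 5 ≤ G.egirth := by
  classical
  rw [← sum_offDiag_shortPathCount] at hsum
  have hle : ∀ p ∈ Finset.univ.offDiag, 1 ≤ shortPathCount G p.1 p.2 :=
    fun p hp ↦ one_le_shortPathCount hdiam (Finset.mem_offDiag.mp hp).2.2
  have heq := (Finset.sum_eq_sum_iff_of_le hle).mp <| (Finset.sum_le_sum hle).antisymm <| by
    simpa [Finset.offDiag_card, Nat.mul_sub_one] using hsum
  refine five_le_egirth_of_shortPathCount_le_one fun u v huv ↦ ?_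
  exact (heq (u, v) (by simpa)).ge

end Degree

section Star

variable {V W : Type*} {G : SimpleGraph V}

theorem eq_starGraph_of_isUniversal (h3 : G.CliqueFree 3) {c : V} (hc : G.IsUniversal c) :
    G = starGraph c := by
  classical
  ext u v
  rw [starGraph_adj]
  refine ⟨fun huv ↦ ⟨huv.ne, ?_⟩, ?_⟩
  · by_contra! hne
    exact h3 {c, u, v} (is3Clique_triple_iff.mpr ⟨hc hne.1.symm, hc hne.2.symm, huv⟩)
  · rintro ⟨huv, rfl | rfl⟩
    exacts [hc huv, (hc huv.symm).symm]

theorem isUniversal_of_neighborSet_eq_singleton (hdiam : G.ediam ≤ 2) {v w : V}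
    (hv : G.neighborSet v = {w}) : G.IsUniversal w := by
  simp only [Set.ext_iff, mem_neighborSet, Set.mem_singleton_iff] at hv
  intro x hwx
  by_contra hadj
  have hvx : v ≠ x := fun hvx ↦ hadj (hvx ▸ ((hv w).mpr rfl).symm)
  have hnvx : ¬ G.Adj v x := fun hvx ↦ hwx ((hv x).mp hvx).symm
  obtain ⟨y, hvy, hxy⟩ := ediam_le_two_iff.mp hdiam v x hvx hnvx
  obtain rfl := (hv y).mp hvy
  exact hadj (Adj.symm hxy)

theorem exists_isUniversal_or_egirth_le_five [Nonempty V] (hdiam : G.ediam ≤ 2) :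
    (∃ c, G.IsUniversal c) ∨ G.egirth ≤ 5 := by
  by_contra! ⟨hstar, hlt⟩
  have exists_ne {b c : V} (hbc : G.Adj b c) : ∃ a, G.Adj b a ∧ a ≠ c := by
    by_contra! h
    exact hstar c <| isUniversal_of_neighborSet_eq_singleton hdiam <|
      Set.eq_singleton_iff_unique_mem.mpr ⟨hbc, h⟩
  let b : V := Classical.arbitrary V
  obtain ⟨v, hbv, hadj⟩ : ∃ v, b ≠ v ∧ ¬ G.Adj b v := by simpa [IsUniversal] using hstar b
  obtain ⟨c, hbc, -⟩ := ediam_le_two_iff.mp hdiam b v hbv hadj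
  obtain ⟨a, hba, hac⟩ := exists_ne hbc
  obtain ⟨d, hcd, hdb⟩ := exists_ne (Adj.symm hbc)
  exact hlt.not_ge (egirth_le_five_of_ediam_le_two hdiam hba.symm hbc hcd hac hdb.symm)

theorem two_le_ediam_of_not_isUniversal {c : V} (hc : ¬ G.IsUniversal c) : 2 ≤ G.ediam := by
  have hlt : 1 < G.ediam :=
    lt_of_not_ge fun hle ↦ hc fun v ↦ (eccent_le_one_iff c).mp (eccent_le_ediam.trans hle) v
  exact Order.add_one_le_of_lt hlt

theorem eq_starGraph_or_ediam_eq_two_and_egirth_eq_five [Nonempty V] (hdiam : G.ediam ≤ 2)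
    (hgirth : 5 ≤ G.egirth) : (∃ c, G = starGraph c) ∨ G.ediam = 2 ∧ G.egirth = 5 := by
  by_cases hstar : ∃ c, G.IsUniversal c
  · exact .inl (hstar.imp fun _ ↦ eq_starGraph_of_isUniversal (five_le_egirth_iff.mp hgirth).1)
  have hle : G.egirth ≤ 5 := (exists_isUniversal_or_egirth_le_five hdiam).resolve_left hstar
  have hge : 2 ≤ G.ediam :=
    two_le_ediam_of_not_isUniversal (not_exists.mp hstar (Classical.arbitrary V))
  exact .inr ⟨hdiam.antisymm hge, hle.antisymm hgirth⟩

theorem nonempty_starGraph_iso (e : V ≃ W) (c : V) (d : W) :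
    Nonempty (starGraph c ≃g starGraph d) := by
  classical
  let f := e.trans (Equiv.swap (e c) d)
  have hf : f c = d := by simp [f]
  refine ⟨f, fun {u v} ↦ ?_⟩
  rw [← hf]
  simp only [starGraph_adj, f.injective.eq_iff, ne_eq]

theorem Snr_two (n : ℕ) [NeZero n] : Snr n 2 = starGraph 0 := by
  ext u v
  simp only [Snr, fromRel_adj, starGraph_adj, Fin.ext_iff, Fin.val_zero]
  lia

end Star

theorem stmt_2_general {V : Type*} [Fintype V] [Nonempty V] (n : ℕ) (hcard : Fintype.card V = n)
    (G : SimpleGraph V) [DecidableRel G.Adj] (hdiam : G.ediam ≤ 2)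
    (hle : ∑ v : V, (G.degree v : ℤ) ^ 2 ≤ ((n : ℤ) - 1) ^ 2 + ((n : ℤ) - 1)) :
    Nonempty (G ≃g Snr n 2) ∨ (G.diam = 2 ∧ G.girth = 5) := by
  have : NeZero n := ⟨hcard ▸ Fintype.card_ne_zero⟩
  have hsum : ∑ v, G.degree v ^ 2 ≤ Fintype.card V * (Fintype.card V - 1) := by
    zify [hcard, NeZero.one_le (n := n)]
    linarith
  have hgirth := five_le_egirth_of_sum_degree_sq_le hdiam hsum
  obtain ⟨c, rfl⟩ | ⟨hd, hg⟩ := eq_starGraph_or_ediam_eq_two_and_egirth_eq_five hdiam hgirth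
  · exact .inl <| Snr_two n ▸ nonempty_starGraph_iso (Fintype.equivFinOfCardEq hcard) c 0
  · exact .inr ⟨by simp [diam, hd], by simp [girth, hg]⟩

theorem stmt_2 {V : Type*} [Fintype V] [DecidableEq V] (n : ℕ) (hn : 3 ≤ n)
    (hcard : Fintype.card V = n)
    (G : SimpleGraph V) [DecidableRel G.Adj] (hsat : IsKSaturated 3 G)
    (heq : ∑ v : V, (G.degree v : ℤ) ^ 2 = ((n : ℤ) - 1) ^ 2 + ((n : ℤ) - 1)) :
    Nonempty (G ≃g Snr n 2) ∨ (G.diam = 2 ∧ G.girth = 5) := by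
  have : Nonempty V := Fintype.card_pos_iff.mp (by lia)
  exact stmt_2_general n hcard G (hsat.ediam_le_two le_rfl) heq.le
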